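/- For every n ≥ 2, the maximum size of a subset of S_n whose distinct elements are at pairwise translocation distance at least 2 equals (n−1)!; that is, A∘(n,2) = (n−1)!. -/

import Mathlib

/-- `IsMove l l'` holds if `l'` is obtained from `l` by a single translocation:
removing the element at position `i` and reinserting it at position `j`. -/
def IsMove {α : Type*} (l l' : List α) : Prop :=
  ∃ i j : Fin l.length, l' = (l.eraseIdx i).insertIdx j (l.get i)

/-- `ReachIn step m l l'` holds if `l'` can be obtained from `l` by `m` applications
of the relation `step`. -/
def ReachIn {α : Type*} (step : List α → List α → Prop) : ℕ → List α → List α → Prop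
  | 0, l, l' => l = l'
  | m+1, l, l' => ∃ l'', step l l'' ∧ ReachIn step m l'' l'

/-- The one-line notation of a permutation of `Fin n`. -/
def oneLine {n : ℕ} (σ : Equiv.Perm (Fin n)) : List (Fin n) := List.ofFn σ

/-- The translocation distance: the minimum number of translocations transforming
the one-line notation of `σ` into that of `π`. -/
noncomputable def translocDist {n : ℕ} (σ π : Equiv.Perm (Fin n)) : ℕ :=
  sInf {m | ReachIn IsMove m (oneLine σ) (oneLine π)}

/-- `maxTranslocCode n d` is the maximum size of a subset of the symmetric group on
`n` elements whose distinct elements are at pairwise translocation distance at least `d`. -/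
noncomputable def maxTranslocCode (n d : ℕ) : ℕ :=
  sSup {M | ∃ C : Finset (Equiv.Perm (Fin n)), C.card = M ∧
    ∀ σ ∈ C, ∀ π ∈ C, σ ≠ π → d ≤ translocDist σ π}

/-!
Deleting a fixed letter maps a code of minimum distance `2` injectively into the `(n - 1)!`
orderings of the remaining letters, because two permutations with the same image differ by moving
that letter. For the lower bound, weigh each descent of a word by the number of letters after it;
the total is its comajor index. Inserting a new letter into a word of length `n - 1` in the `n`
possible positions changes the comajor index by `n` different amounts lying in an interval of `n`
consecutive integers, hence by amounts that are distinct modulo `n`. So permutations with the same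
comajor index modulo `n` are never one translocation apart, and by pigeonhole some residue class
has at least `n! / n` elements.
-/

namespace ReachIn

variable {α : Type*} {step : List α → List α → Prop} {a b c : List α} {m k : ℕ}

theorem trans (hab : ReachIn step m a b) (hbc : ReachIn step k b c) :
    ReachIn step (m + k) a c := by
  induction m generalizing a with
  | zero =>
    obtain rfl : a = b := hab
    simpa using hbc
  | succ m ih =>
    obtain ⟨x, hax, hxb⟩ := hab
    rw [Nat.add_right_comm]
    exact ⟨x, hax, ih hxb⟩

theorem map {f : List α → List α} (hf : ∀ ⦃l l'⦄, step l l' → step (f l) (f l'))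
    (hab : ReachIn step m a b) : ReachIn step m (f a) (f b) := by
  induction m generalizing a with
  | zero => exact congrArg f hab
  | succ m ih =>
    obtain ⟨x, hax, hxb⟩ := hab
    exact ⟨f x, hf hax, ih hxb⟩

theorem one_iff : ReachIn step 1 a b ↔ step a b := by
  simp [ReachIn]

end ReachIn

section Moves

variable {α : Type*} {l l' : List α}

theorem IsMove.cons (x : α) (h : IsMove l l') : IsMove (x :: l) (x :: l') := by
  obtain ⟨i, j, rfl⟩ := h
  exact ⟨i.succ, j.succ, by simp⟩

theorem isMove_swap (x y : α) (l : List α) : IsMove (y :: x :: l) (x :: y :: l) :=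
  ⟨⟨0, by simp⟩, ⟨1, by simp⟩, rfl⟩

theorem exists_reachIn_isMove_of_perm (h : l.Perm l') : ∃ m, ReachIn IsMove m l l' := by
  induction h with
  | nil => exact ⟨0, rfl⟩
  | cons x _ ih =>
    obtain ⟨m, hm⟩ := ih
    exact ⟨m, hm.map fun _ _ => IsMove.cons x⟩
  | swap x y l => exact ⟨1, ReachIn.one_iff.2 (isMove_swap x y l)⟩
  | trans _ _ ih₁ ih₂ =>
    obtain ⟨m, hm⟩ := ih₁
    obtain ⟨k, hk⟩ := ih₂
    exact ⟨m + k, hm.trans hk⟩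

theorem IsMove.exists_insertIdx (h : IsMove l l') :
    ∃ (a : α) (w : List α) (i j : ℕ), i ≤ w.length ∧ j ≤ w.length ∧
      l = w.insertIdx i a ∧ l' = w.insertIdx j a := by
  obtain ⟨i, j, rfl⟩ := h
  have hlen : (l.eraseIdx i).length + 1 = l.length := List.length_eraseIdx_add_one i.2
  exact ⟨l.get i, l.eraseIdx i, i, j, by omega, by omega,
    (List.insertIdx_eraseIdx_getElem i.2).symm, rfl⟩

theorem insertIdx_idxOf_erase [DecidableEq α] {a : α} (ha : a ∈ l) :
    (l.erase a).insertIdx (l.idxOf a) a = l := by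
  have hi : l.idxOf a < l.length := List.idxOf_lt_length_iff.2 ha
  rw [List.erase_eq_eraseIdx_of_idxOf rfl]
  simpa using List.insertIdx_eraseIdx_getElem hi

theorem isMove_of_erase_eq [DecidableEq α] {a : α} (ha : a ∈ l) (ha' : a ∈ l')
    (h : l.erase a = l'.erase a) : IsMove l l' := by
  have hlen : l'.length = l.length := by
    rw [← List.length_erase_add_one ha, ← List.length_erase_add_one ha', h]
  refine ⟨⟨l.idxOf a, List.idxOf_lt_length_iff.2 ha⟩,
    ⟨l'.idxOf a, hlen ▸ List.idxOf_lt_length_iff.2 ha'⟩, ?_⟩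
  rw [← List.erase_eq_eraseIdx_of_idxOf rfl, List.get_eq_getElem, List.getElem_idxOf, h,
    insertIdx_idxOf_erase ha']

end Moves

section ComajorIndex

variable {α : Type*} [LinearOrder α] {a p q : α} {l l' w : List α} {i j : ℕ}

/-- The indicator of a descent from `x` to `y`, as a natural number so that it can serve as a
coefficient. -/
def descent (x y : α) : ℕ := if y < x then 1 else 0

/-- The comajor index of a word: the sum, over its descents, of the number of letters after the
descent, counting the lower letter of the descent. -/
def comaj : List α → ℕ
  | x :: y :: l => descent x y * (l.length + 1) + comaj (y :: l)
  | _ => 0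

theorem descent_add_descent_swap (h : a ≠ q) : descent a q + descent q a = 1 := by
  rcases h.lt_or_gt with h | h <;> simp [descent, h, h.not_gt]

theorem descent_add_descent_eq_or (p a q : α) :
    descent p a + descent a q = descent p q ∨ descent p a + descent a q = descent p q + 1 := by
  unfold descent
  grind

theorem comaj_cons_of_forall_le (h : ∀ x ∈ l, p ≤ x) : comaj (p :: l) = comaj l := by
  cases l with
  | nil => rfl
  | cons q w => simp [comaj, descent, (h q (by simp)).not_gt]

/-- Measured from `comaj (p :: q :: w) + descent p a`, inserting `a` before `q` reaches one end of
the interval `[0, w.length + 1]`. The value of `descent p q + descent q a` shifts the insertions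
after `q` by `1` or `0`, so that they stay within the rest of this interval. -/
theorem comaj_cons_cons_cons_eq_or (h : a ≠ q) (p : α) (w : List α) :
    (comaj (p :: a :: q :: w) = comaj (p :: q :: w) + descent p a ∧
      descent p q + descent q a = descent p a + 1) ∨
    (comaj (p :: a :: q :: w) = comaj (p :: q :: w) + descent p a + (w.length + 1) ∧
      descent p q + descent q a = descent p a) := by
  have hswap := descent_add_descent_swap h
  simp only [comaj, List.length_cons]
  refine (descent_add_descent_eq_or p a q).imp (fun hc => ⟨?_, by omega⟩)
    (fun hc => ⟨?_, by omega⟩)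
  · linear_combination (w.length + 1) * hc
  · linear_combination (w.length + 1) * hc

theorem comaj_cons_insertIdx_succ (p q : α) (hi : i ≤ w.length) :
    comaj (p :: (q :: w).insertIdx (i + 1) a) + comaj (q :: w) =
      comaj (p :: q :: w) + descent p q + comaj (q :: w.insertIdx i a) := by
  simp only [List.insertIdx_succ_cons, comaj, List.length_insertIdx_of_le_length hi]
  ring

theorem comaj_cons_insertIdx_mem_Icc (p : α) (ha : a ∉ w) (hi : i ≤ w.length) :
    comaj (p :: w.insertIdx i a) ∈ Set.Icc (comaj (p :: w) + descent p a)
      (comaj (p :: w) + descent p a + w.length) := by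
  induction w generalizing p i with
  | nil =>
    obtain rfl : i = 0 := by simpa using hi
    simp [comaj]
  | cons q w ih =>
    obtain ⟨haq, haw⟩ := List.ne_and_not_mem_of_not_mem_cons ha
    have hcases := comaj_cons_cons_cons_eq_or haq p w
    rw [Set.mem_Icc, List.length_cons]
    cases i with
    | zero =>
      rw [List.insertIdx_zero]
      omega
    | succ i =>
      have hi : i ≤ w.length := by simpa using hi
      have hsucc := comaj_cons_insertIdx_succ (a := a) p q hi
      have ⟨hlo, hup⟩ := ih q haw hi
      omega

theorem comaj_cons_insertIdx_zero_ne_succ (p : α) (ha : a ∉ q :: w) (hi : i ≤ w.length) :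
    comaj (p :: (q :: w).insertIdx 0 a) ≠ comaj (p :: (q :: w).insertIdx (i + 1) a) := by
  obtain ⟨haq, haw⟩ := List.ne_and_not_mem_of_not_mem_cons ha
  have hcases := comaj_cons_cons_cons_eq_or haq p w
  have hsucc := comaj_cons_insertIdx_succ (a := a) p q hi
  have ⟨hlo, hup⟩ := comaj_cons_insertIdx_mem_Icc q haw hi
  rw [List.insertIdx_zero]
  omega

theorem comaj_cons_insertIdx_injOn (p : α) (ha : a ∉ w) :
    Set.InjOn (fun i => comaj (p :: w.insertIdx i a)) (Set.Iic w.length) := by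
  induction w generalizing p with
  | nil => exact fun i hi j hj _ => (Nat.le_zero.1 hi).trans (Nat.le_zero.1 hj).symm
  | cons q w ih =>
    intro i hi j hj hij
    rw [Set.mem_Iic, List.length_cons] at hi hj
    cases i with
    | zero =>
      cases j with
      | zero => rfl
      | succ j => exact absurd hij (comaj_cons_insertIdx_zero_ne_succ p ha (by omega))
    | succ i =>
      cases j with
      | zero => exact absurd hij.symm (comaj_cons_insertIdx_zero_ne_succ p ha (by omega))
      | succ j =>
        have hi : i ≤ w.length := by omega
        have hj : j ≤ w.length := by omega
        have hsucc_i := comaj_cons_insertIdx_succ (a := a) p q hi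
        have hsucc_j := comaj_cons_insertIdx_succ (a := a) p q hj
        dsimp only at hij
        exact congrArg _ (ih q (List.not_mem_of_not_mem_cons ha) hi hj (by dsimp only; omega))

theorem eq_of_comaj_insertIdx_modEq (ha : a ∉ w) (hi : i ≤ w.length) (hj : j ≤ w.length)
    (h : comaj (w.insertIdx i a) ≡ comaj (w.insertIdx j a) [MOD w.length + 1]) : i = j := by
  have : Nonempty α := ⟨a⟩
  -- A lower bound `p` of all letters, put in front, creates no descent.
  obtain ⟨p, hp⟩ := (List.finite_toSet (a :: w)).bddBelow
  have hcons : ∀ k ≤ w.length, comaj (p :: w.insertIdx k a) = comaj (w.insertIdx k a) :=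
    fun k hk => comaj_cons_of_forall_le fun x hx =>
      hp (by simpa [List.mem_insertIdx hk] using hx)
  rw [← hcons i hi, ← hcons j hj] at h
  have ⟨hlo_i, hup_i⟩ := comaj_cons_insertIdx_mem_Icc p ha hi
  have ⟨hlo_j, hup_j⟩ := comaj_cons_insertIdx_mem_Icc p ha hj
  exact comaj_cons_insertIdx_injOn p ha hi hj
    (h.eq_of_abs_lt (abs_lt.2 ⟨by omega, by omega⟩))

theorem IsMove.eq_of_comaj_modEq (h : IsMove l l') (hl : l.Nodup)
    (hcomaj : comaj l ≡ comaj l' [MOD l.length]) : l = l' := by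
  obtain ⟨a, w, i, j, hi, hj, rfl, rfl⟩ := h.exists_insertIdx
  have ha : a ∉ w :=
    (List.nodup_cons.1 ((List.perm_insertIdx a w hi).nodup_iff.1 hl)).1
  rw [List.length_insertIdx_of_le_length hi] at hcomaj
  rw [eq_of_comaj_insertIdx_modEq ha hi hj hcomaj]

end ComajorIndex

section Codes

open Equiv (Perm)

variable {n : ℕ} {σ π : Perm (Fin n)}

theorem oneLine_injective : Function.Injective (oneLine : Perm (Fin n) → List (Fin n)) :=
  List.ofFn_injective.comp DFunLike.coe_injective

theorem nodup_oneLine (σ : Perm (Fin n)) : (oneLine σ).Nodup :=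
  List.nodup_ofFn.2 σ.injective

theorem mem_oneLine (σ : Perm (Fin n)) (a : Fin n) : a ∈ oneLine σ :=
  List.mem_ofFn.2 (σ.surjective a)

theorem length_oneLine (σ : Perm (Fin n)) : (oneLine σ).length = n :=
  List.length_ofFn

theorem oneLine_perm_finRange (σ : Perm (Fin n)) : (oneLine σ).Perm (List.finRange n) :=
  (List.perm_ext_iff_of_nodup (nodup_oneLine σ) (List.nodup_finRange n)).2
    fun a => by simp [mem_oneLine]

theorem translocDist_le_one_of_isMove (h : IsMove (oneLine σ) (oneLine π)) :
    translocDist σ π ≤ 1 :=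
  Nat.sInf_le (ReachIn.one_iff.2 h)

theorem two_le_translocDist (hne : σ ≠ π) (h : ¬ IsMove (oneLine σ) (oneLine π)) :
    2 ≤ translocDist σ π := by
  -- Without reachability the infimum would be over the empty set, hence `0`.
  have hreach := exists_reachIn_isMove_of_perm
    ((oneLine_perm_finRange σ).trans (oneLine_perm_finRange π).symm)
  refine le_csInf hreach fun m hm => ?_
  match m, hm with
  | 0, hm => exact absurd (oneLine_injective hm) hne
  | 1, hm => exact absurd (ReachIn.one_iff.1 hm) h
  | m + 2, _ => omega

/-- `C` is a translocation code of minimum distance at least `d`, written as in the definition of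
`maxTranslocCode`. -/
def IsTranslocCode (d : ℕ) (C : Finset (Perm (Fin n))) : Prop :=
  ∀ σ ∈ C, ∀ π ∈ C, σ ≠ π → d ≤ translocDist σ π

theorem IsTranslocCode.card_le_factorial {C : Finset (Perm (Fin (n + 1)))}
    (hC : IsTranslocCode 2 C) : C.card ≤ n.factorial := by
  let T := ((List.finRange (n + 1)).erase 0).permutations
  have hT : T.length = n.factorial := by
    rw [List.length_permutations, List.length_erase_of_mem (List.mem_finRange 0),
      List.length_finRange, Nat.add_sub_cancel]
  have hmaps : ∀ σ ∈ C, (oneLine σ).erase 0 ∈ T.toFinset := fun σ _ =>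
    List.mem_toFinset.2 (List.mem_permutations.2 ((oneLine_perm_finRange σ).erase 0))
  have hinj : Set.InjOn (fun σ => (oneLine σ).erase 0) (C : Set (Perm (Fin (n + 1)))) := by
    intro σ hσ π hπ h
    by_contra hne
    have hmove := isMove_of_erase_eq (mem_oneLine σ 0) (mem_oneLine π 0) h
    exact (translocDist_le_one_of_isMove hmove).not_gt (hC σ hσ π hπ hne)
  calc C.card ≤ T.toFinset.card := Finset.card_le_card_of_injOn _ hmaps hinj
    _ ≤ T.length := T.toFinset_card_le
    _ = n.factorial := hT

theorem isTranslocCode_two_filter_comaj (n r : ℕ) :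
    IsTranslocCode 2 {σ : Perm (Fin n) | comaj (oneLine σ) % n = r} := by
  intro σ hσ π hπ hne
  rw [Finset.mem_filter_univ] at hσ hπ
  refine two_le_translocDist hne fun hmove => hne (oneLine_injective ?_)
  refine hmove.eq_of_comaj_modEq (nodup_oneLine σ) ?_
  rw [length_oneLine]
  exact hσ.trans hπ.symm

theorem exists_factorial_le_card_filter_comaj (n : ℕ) :
    ∃ r, n.factorial ≤
      Finset.card {σ : Perm (Fin (n + 1)) | comaj (oneLine σ) % (n + 1) = r} := by
  obtain ⟨r, -, hr⟩ := Finset.exists_le_card_fiber_of_mul_le_card_of_maps_to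
    (s := (Finset.univ : Finset (Perm (Fin (n + 1))))) (t := Finset.range (n + 1))
    (f := fun σ => comaj (oneLine σ) % (n + 1)) (n := n.factorial)
    (fun σ _ => Finset.mem_range.2 (Nat.mod_lt _ n.succ_pos)) ⟨0, by simp⟩
    (by simp [Fintype.card_perm, Nat.factorial_succ])
  exact ⟨r, hr⟩

end Codes

/-- For every `n ≥ 2`, `A∘(n,2) = (n−1)!`. -/
theorem maxTranslocCode_two_eq (n : ℕ) (hn : 2 ≤ n) :
    maxTranslocCode n 2 = (n - 1).factorial := by
  obtain ⟨k, rfl⟩ : ∃ k, n = k + 1 := ⟨n - 1, by omega⟩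
  obtain ⟨r, hr⟩ := exists_factorial_le_card_filter_comaj k
  have hcode := isTranslocCode_two_filter_comaj (k + 1) r
  refine IsGreatest.csSup_eq ⟨⟨_, hcode.card_le_factorial.antisymm hr, hcode⟩, ?_⟩
  rintro M ⟨C, rfl, hC⟩
  exact IsTranslocCode.card_le_factorial hC
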